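/- arXiv:1905.03501 — 2 statements merged into one kernel-verified Lean document; each statement's English description precedes it below -/
import Mathlib

section
/- Let π and π* be two stationary policies for a finite entropy-regularized MDP with discount γ ∈ [0,1). Then the (unregularized) expected discounted rewards satisfy: E_{τ∼π}[ Σ_{t=0}^∞ γ^t r(s_t,a_t) ] = E_{τ∼π*}[ Σ_{t=0}^∞ γ^t r(s_t,a_t) ] − ( E_{τ∼π*}[ Σ_{t=0}^∞ γ^t A^π(s_t,a_t) ] + E_{τ∼π}[ Σ_{t=0}^∞ γ^t ε h^π_{s_t} ] ). -/
/-!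
The advantage of `π`, averaged along a trajectory of `π*`, telescopes. Writing `V` for the value
function of `π`, the one-step Markov property gives
`E_{π*}[A(s_t, a_t)] = E_{π*}[r(s_t, a_t)] + γ E_{π*}[V(s_{t+1})] - E_{π*}[V(s_t)]`
(`expAt_succ` and linearity), so multiplying by `γ ^ t` and summing over `t` leaves
`E_{π*}[∑ γ^t A] = E_{π*}[∑ γ^t r] - E_μ[V]`. On the other hand the laws of the states depend
linearly on the initial distribution (`stateDist_eq_sum_dirac`), hence
`E_μ[V] = E_π[∑ γ^t r] + E_π[∑ γ^t ε h^π]`, and subtracting gives the identity. All series converge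
because expectations of a function on the finite set `S × A` are bounded uniformly in time.
-/


open scoped BigOperators

/-- `p` is a probability distribution on the finite type `α`. -/
def IsProb {α : Type*} [Fintype α] (p : α → ℝ) : Prop :=
  (∀ x, 0 ≤ p x) ∧ ∑ x, p x = 1

/-- Shannon entropy of a finite distribution.  The convention `0 * log 0 = 0`
holds automatically since `Real.log 0 = 0`. -/
noncomputable def entropy {α : Type*} [Fintype α] (p : α → ℝ) : ℝ :=
  -∑ x, p x * Real.log (p x)

/-- Distribution of the state `s_t` at time `t` of a trajectory generated by
the stationary policy `π` in the MDP with transition kernel `P`, started from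
the initial state distribution `μ`. -/
noncomputable def stateDist {S A : Type*} [Fintype S] [Fintype A]
    (P : S → A → S → ℝ) (π : S → A → ℝ) (μ : S → ℝ) : ℕ → S → ℝ
  | 0 => μ
  | t + 1 => fun s' => ∑ s, ∑ a, stateDist P π μ t s * π s a * P s a s'

/-- `E_{τ ∼ π}[ g (s_t, a_t) ]` for a trajectory generated by the stationary
policy `π` (with transition kernel `P`), started from `s₀ ∼ μ`. -/
noncomputable def expAt {S A : Type*} [Fintype S] [Fintype A]
    (P : S → A → S → ℝ) (π : S → A → ℝ) (μ : S → ℝ) (t : ℕ) (g : S → A → ℝ) : ℝ :=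
  ∑ s, stateDist P π μ t s * ∑ a, π s a * g s a

/-- The Dirac distribution concentrated at the state `s`. -/
def dirac {S : Type*} [DecidableEq S] (s : S) : S → ℝ :=
  fun s' => if s' = s then 1 else 0

/-- Entropy-regularized (`γ`-discounted) value function:
`V^π(s) = E[ ∑ₜ γ^t (r(s_t,a_t) + ε h^π_{s_t}) | s₀ = s ]`. -/
noncomputable def valueV {S A : Type*} [Fintype S] [Fintype A] [DecidableEq S]
    (P : S → A → S → ℝ) (r : S → A → ℝ) (π : S → A → ℝ) (ε γ : ℝ) (s : S) : ℝ :=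
  ∑' t : ℕ, γ ^ t * expAt P π (dirac s) t (fun s' a => r s' a + ε * entropy (π s'))

/-- Entropy-regularized Q-function: `Q^π(s,a) = r(s,a) + γ E_{s' ∼ P(·|s,a)}[V^π(s')]`. -/
noncomputable def valueQ {S A : Type*} [Fintype S] [Fintype A] [DecidableEq S]
    (P : S → A → S → ℝ) (r : S → A → ℝ) (π : S → A → ℝ) (ε γ : ℝ) (s : S) (a : A) : ℝ :=
  r s a + γ * ∑ s', P s a s' * valueV P r π ε γ s'

/-- Advantage function `A^π(s,a) = Q^π(s,a) - V^π(s)`. -/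
noncomputable def adv {S A : Type*} [Fintype S] [Fintype A] [DecidableEq S]
    (P : S → A → S → ℝ) (r : S → A → ℝ) (π : S → A → ℝ) (ε γ : ℝ) (s : S) (a : A) : ℝ :=
  valueQ P r π ε γ s a - valueV P r π ε γ s

section RewardDiff

variable {S A : Type*} [Fintype S] [Fintype A] {P : S → A → S → ℝ} {π : S → A → ℝ} {μ : S → ℝ}

lemma isProb_dirac [DecidableEq S] (s : S) : IsProb (dirac s) := by
  refine ⟨fun x => ?_, by simp [dirac]⟩
  unfold dirac
  split_ifs <;> norm_num

lemma isProb_stateDist (hP : ∀ s a, IsProb (P s a)) (hπ : ∀ s, IsProb (π s)) (hμ : IsProb μ)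
    (t : ℕ) : IsProb (stateDist P π μ t) := by
  induction t with
  | zero => exact hμ
  | succ t ih =>
    refine ⟨fun s' => Finset.sum_nonneg fun s _ => Finset.sum_nonneg fun a _ =>
      mul_nonneg (mul_nonneg (ih.1 s) ((hπ s).1 a)) ((hP s a).1 s'), ?_⟩
    simp only [stateDist]
    rw [Finset.sum_comm]
    calc ∑ s, ∑ s', ∑ a, stateDist P π μ t s * π s a * P s a s'
        = ∑ s, stateDist P π μ t s := by
          refine Finset.sum_congr rfl fun s _ => ?_
          rw [Finset.sum_comm]
          simp_rw [← Finset.mul_sum, (hP s _).2, mul_one, ← Finset.mul_sum, (hπ s).2, mul_one]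
      _ = 1 := ih.2

lemma IsProb.abs_sum_mul_le {α : Type*} [Fintype α] {p : α → ℝ} (hp : IsProb p) (f : α → ℝ) :
    |∑ x, p x * f x| ≤ ∑ x, |f x| := by
  refine (Finset.abs_sum_le_sum_abs _ _).trans (Finset.sum_le_sum fun x _ => ?_)
  have h1 : p x ≤ 1 := hp.2 ▸ Finset.single_le_sum (fun y _ => hp.1 y) (Finset.mem_univ x)
  rw [abs_mul, abs_of_nonneg (hp.1 x)]
  exact mul_le_of_le_one_left (abs_nonneg _) h1

/-- The bound on expectations is uniform in `t`, so discounted series converge geometrically. -/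
lemma summable_discounted_expAt (hP : ∀ s a, IsProb (P s a)) (hπ : ∀ s, IsProb (π s))
    (hμ : IsProb μ) {γ : ℝ} (hγ0 : 0 ≤ γ) (hγ1 : γ < 1) (g : S → A → ℝ) :
    Summable fun t : ℕ => γ ^ t * expAt P π μ t g := by
  refine Summable.of_norm_bounded
    ((summable_geometric_of_lt_one hγ0 hγ1).mul_right (∑ s, ∑ a, |g s a|)) fun t => ?_
  rw [Real.norm_eq_abs, abs_mul, abs_of_nonneg (pow_nonneg hγ0 t)]
  refine mul_le_mul_of_nonneg_left ?_ (pow_nonneg hγ0 t)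
  exact ((isProb_stateDist hP hπ hμ t).abs_sum_mul_le _).trans
    (Finset.sum_le_sum fun s _ => (hπ s).abs_sum_mul_le _)

lemma expAt_add (t : ℕ) (f g : S → A → ℝ) :
    expAt P π μ t (fun s a => f s a + g s a) = expAt P π μ t f + expAt P π μ t g := by
  simp only [expAt, mul_add, Finset.sum_add_distrib]

lemma expAt_sub (t : ℕ) (f g : S → A → ℝ) :
    expAt P π μ t (fun s a => f s a - g s a) = expAt P π μ t f - expAt P π μ t g := by
  simp only [expAt, mul_sub, Finset.sum_sub_distrib]

lemma expAt_const_mul (t : ℕ) (c : ℝ) (f : S → A → ℝ) :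
    expAt P π μ t (fun s a => c * f s a) = c * expAt P π μ t f := by
  simp only [expAt, mul_left_comm _ c, ← Finset.mul_sum]

lemma expAt_state (hπ : ∀ s, IsProb (π s)) (t : ℕ) (f : S → ℝ) :
    expAt P π μ t (fun s _ => f s) = ∑ s, stateDist P π μ t s * f s := by
  simp only [expAt, ← Finset.sum_mul, (hπ _).2, one_mul]

/-- Markov property: averaging the conditional expectation of `f s_{t+1}` given `(s_t, a_t)`
gives the expectation of `f s_{t+1}`. -/
lemma expAt_succ (hπ : ∀ s, IsProb (π s)) (t : ℕ) (f : S → ℝ) :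
    expAt P π μ t (fun s a => ∑ s', P s a s' * f s') =
      expAt P π μ (t + 1) (fun s _ => f s) := by
  rw [expAt_state hπ]
  simp only [expAt, stateDist, Finset.sum_mul, Finset.mul_sum]
  rw [Finset.sum_comm (f := fun s' s => ∑ a, stateDist P π μ t s * π s a * P s a s' * f s')]
  refine Finset.sum_congr rfl fun s _ => ?_
  rw [Finset.sum_comm]
  exact Finset.sum_congr rfl fun s' _ => Finset.sum_congr rfl fun a _ => by ring

lemma stateDist_eq_sum_dirac [DecidableEq S] (t : ℕ) (s' : S) :
    stateDist P π μ t s' = ∑ s, μ s * stateDist P π (dirac s) t s' := by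
  induction t generalizing s' with
  | zero => simp [stateDist, dirac]
  | succ t ih =>
    simp only [stateDist, Finset.mul_sum]
    conv_rhs => rw [Finset.sum_comm]
    refine Finset.sum_congr rfl fun x _ => ?_
    conv_rhs => rw [Finset.sum_comm]
    refine Finset.sum_congr rfl fun a _ => ?_
    rw [ih x, Finset.sum_mul, Finset.sum_mul]
    exact Finset.sum_congr rfl fun s _ => by ring

lemma expAt_eq_sum_dirac [DecidableEq S] (t : ℕ) (g : S → A → ℝ) :
    expAt P π μ t g = ∑ s, μ s * expAt P π (dirac s) t g := by
  simp only [expAt]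
  simp_rw [stateDist_eq_sum_dirac (μ := μ) t, Finset.sum_mul]
  rw [Finset.sum_comm]
  refine Finset.sum_congr rfl fun s _ => ?_
  rw [Finset.mul_sum]
  exact Finset.sum_congr rfl fun x _ => mul_assoc _ _ _

/-- Averaging the value function over the initial distribution gives the regularized return. -/
lemma sum_mul_valueV [DecidableEq S] (hP : ∀ s a, IsProb (P s a)) (hπ : ∀ s, IsProb (π s))
    {γ : ℝ} (hγ0 : 0 ≤ γ) (hγ1 : γ < 1) (r : S → A → ℝ) (ε : ℝ) :
    ∑ s, μ s * valueV P r π ε γ s =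
      ∑' t : ℕ, γ ^ t * expAt P π μ t (fun s a => r s a + ε * entropy (π s)) := by
  simp only [valueV, ← tsum_mul_left]
  rw [← Summable.tsum_finsetSum fun s _ =>
    (summable_discounted_expAt hP hπ (isProb_dirac s) hγ0 hγ1 _).mul_left _]
  refine tsum_congr fun t => ?_
  rw [expAt_eq_sum_dirac (μ := μ), Finset.mul_sum]
  exact Finset.sum_congr rfl fun s _ => by ring

end RewardDiff

/-- **Reward-difference identity** (discounted case):
`E_{τ∼π}[∑ γ^t r] = E_{τ∼π*}[∑ γ^t r] − ( E_{τ∼π*}[∑ γ^t A^π] + E_{τ∼π}[∑ γ^t ε h^π] )`. -/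
theorem reward_diff_discounted {S A : Type*} [Fintype S] [Fintype A] [DecidableEq S]
    [Nonempty S] [Nonempty A]
    (P : S → A → S → ℝ) (r : S → A → ℝ) (μ : S → ℝ) (π πstar : S → A → ℝ) (ε γ : ℝ)
    (hP : ∀ s a, IsProb (P s a)) (hπ : ∀ s, IsProb (π s)) (hπstar : ∀ s, IsProb (πstar s))
    (hμ : IsProb μ) (hε : 0 < ε) (hγ0 : 0 ≤ γ) (hγ1 : γ < 1) :
    ∑' t : ℕ, γ ^ t * expAt P π μ t r =
      (∑' t : ℕ, γ ^ t * expAt P πstar μ t r) -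
        ((∑' t : ℕ, γ ^ t * expAt P πstar μ t (fun s a => adv P r π ε γ s a)) +
          ∑' t : ℕ, γ ^ t * expAt P π μ t (fun s _ => ε * entropy (π s))) := by
  have hr := summable_discounted_expAt hP hπ hμ hγ0 hγ1 r
  have hh := summable_discounted_expAt hP hπ hμ hγ0 hγ1 (fun s _ => ε * entropy (π s))
  have hrs := summable_discounted_expAt hP hπstar hμ hγ0 hγ1 r
  have hV := summable_discounted_expAt hP hπstar hμ hγ0 hγ1 (fun s _ => valueV P r π ε γ s)
  have h0 : expAt P πstar μ 0 (fun s _ => valueV P r π ε γ s) =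
      (∑' t : ℕ, γ ^ t * expAt P π μ t r) +
        ∑' t : ℕ, γ ^ t * expAt P π μ t (fun s _ => ε * entropy (π s)) := by
    rw [expAt_state hπstar, ← hr.tsum_add hh]
    simp only [stateDist]
    rw [sum_mul_valueV hP hπ hγ0 hγ1]
    exact tsum_congr fun t => by rw [expAt_add, mul_add]
  have hA : ∀ t : ℕ, γ ^ t * expAt P πstar μ t (fun s a => adv P r π ε γ s a) =
      γ ^ t * expAt P πstar μ t r +
        (γ ^ (t + 1) * expAt P πstar μ (t + 1) (fun s _ => valueV P r π ε γ s) -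
          γ ^ t * expAt P πstar μ t (fun s _ => valueV P r π ε γ s)) := by
    intro t
    simp only [adv, valueQ]
    rw [expAt_sub, expAt_add, expAt_const_mul, expAt_succ hπstar]
    ring
  have hV1 := (summable_nat_add_iff 1).2 hV
  have htel := hV.tsum_eq_zero_add
  rw [pow_zero, one_mul, h0] at htel
  rw [tsum_congr hA, hrs.tsum_add (hV1.sub hV), hV1.tsum_sub hV, htel]
  ring
end

section
/- Let π and π* be two stationary policies for a finite entropy-regularized MDP in the undiscounted setting (γ = 1). Assume (i) for every state s the series E[ Σ_{t=0}^∞ ( |r(s_t,a_t)| + ε h^π_{s_t} ) | s_0 = s ] under trajectories generated by π converges, so the undiscounted value V^π(s) = E[ Σ_{t=0}^∞ ( r(s_t,a_t) + ε h^π_{s_t} ) | s_0 = s ] is well-defined; (ii) under trajectories generated by π*, E[ Σ_{t=0}^∞ ( |r(s_t,a_t)| + ε h^{π*}_{s_t} + ε h^π_{s_t} ) ] < ∞; and (iii) E_{τ∼π*}[ V^π(s_T) ] → 0 as T → ∞. Then η(π*) − η(π) = E_{τ∼π*}[ Σ_{t=0}^∞ ( A^π(s_t,a_t) + ε h^{π*}_{s_t}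 ) ], where η(π) = E_{s_0∼μ}[ V^π(s_0) ] and η(π*) = E_{τ∼π*}[ Σ_{t=0}^∞ ( r(s_t,a_t) + ε h^{π*}_{s_t} ) ]. -/
/-!
Write `m t = E_{τ ∼ π*}[V^π(s_t)]`. Since `A^π(s,a) = r(s,a) + E[V^π(s')] - V^π(s)`, the `t`-th term
of the right-hand series is the `t`-th term of the series for `η(π*)` plus `m (t+1) - m t`
(`expAt_adv`), and the increments telescope to `-m 0 = -η(π)` because `m t → 0`.

The sums `∑'` are unconditional, so convergence of the telescoping partial sums is not enough: `m`
itself has to be shown summable, and `hstar` does not control `m`. What does is that `m` is a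
linear functional of the orbit of a linear map of the finite-dimensional space `S → ℝ`; such a
sequence decays geometrically as soon as it tends to `0` (`summable_of_tendsto_zero`). To see this,
consider the finite-dimensional, shift-invariant space of all null sequences of the form
`t ↦ g (T ^ t x)`. The powers of the shift tend to `0` pointwise on it, so in a basis they tend to
`0` as matrices, whence some power has norm at most `1/2` (`summable_pow_of_tendsto`).
-/

open scoped BigOperators

/-- If `k` steps at least halve a nonnegative sequence, then every partial sum is at most twice the
sum of the first `k` terms. -/
lemma summable_of_halving (f : ℕ → ℝ) (hf : ∀ t, 0 ≤ f t) (k : ℕ)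
    (h : ∀ t, f (t + k) ≤ f t / 2) : Summable f := by
  refine summable_of_sum_range_le (c := 2 * ∑ t ∈ Finset.range k, f t) hf fun n => ?_
  have h1 : ∑ t ∈ Finset.range n, f t ≤ ∑ t ∈ Finset.range (k + n), f t :=
    Finset.sum_le_sum_of_subset_of_nonneg (Finset.range_mono (by omega)) fun i _ _ => hf i
  rw [Finset.sum_range_add] at h1
  have h2 : ∑ t ∈ Finset.range n, f (k + t) ≤ (∑ t ∈ Finset.range n, f t) / 2 := by
    rw [Finset.sum_div]
    exact Finset.sum_le_sum fun i _ => by rw [add_comm k i]; exact h i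
  linarith

lemma summable_pow_of_tendsto {R : Type*} [NormedRing R] [CompleteSpace R] (a : R)
    (h : Filter.Tendsto (fun n : ℕ => a ^ n) Filter.atTop (nhds 0)) :
    Summable fun n : ℕ => a ^ n := by
  obtain ⟨k, hk⟩ := ((tendsto_zero_iff_norm_tendsto_zero.1 h).eventually
    (ge_mem_nhds (show (0 : ℝ) < 1 / 2 by norm_num))).exists
  refine Summable.of_norm (summable_of_halving _ (fun _ => norm_nonneg _) k fun t => ?_)
  calc ‖a ^ (t + k)‖ ≤ ‖a ^ t‖ * ‖a ^ k‖ := by rw [pow_add]; exact norm_mul_le _ _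
    _ ≤ ‖a ^ t‖ * (1 / 2) := by gcongr
    _ = ‖a ^ t‖ / 2 := by ring

attribute [local instance] Matrix.linftyOpNormedRing in
/-- A linear endomorphism of a finite-dimensional Hausdorff space whose powers tend to `0` pointwise
has summable powers, when tested against a vector and a linear functional. No norm is assumed on the
space: the topology enters only through continuity of coordinates. -/
lemma summable_of_pointwise {W : Type*} [AddCommGroup W] [Module ℝ W] [TopologicalSpace W]
    [IsTopologicalAddGroup W] [ContinuousSMul ℝ W] [T2Space W] [FiniteDimensional ℝ W]
    (σ : W →ₗ[ℝ] W)
    (h : ∀ w, Filter.Tendsto (fun n : ℕ => (σ ^ n) w) Filter.atTop (nhds 0))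
    (g : W →ₗ[ℝ] ℝ) (w : W) : Summable fun n : ℕ => g ((σ ^ n) w) := by
  classical
  let b := Module.finBasis ℝ W
  let M := LinearMap.toMatrixAlgEquiv b
  have hM : Summable fun n : ℕ => (M σ) ^ n := by
    -- Completeness refers to the uniformity of the operator norm, which is the product uniformity.
    have : @CompleteSpace (Matrix (Fin (Module.finrank ℝ W)) (Fin (Module.finrank ℝ W)) ℝ)
        Matrix.linftyOpNormedRing.toMetricSpace.toPseudoMetricSpace.toUniformSpace :=
      inferInstanceAs (CompleteSpace (Fin (Module.finrank ℝ W) → Fin (Module.finrank ℝ W) → ℝ))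
    refine summable_pow_of_tendsto _ (tendsto_pi_nhds.2 fun i => tendsto_pi_nhds.2 fun j => ?_)
    have hc : Continuous (b.coord i) := LinearMap.continuous_of_finiteDimensional _
    have := (hc.tendsto 0).comp (h (b j))
    rw [map_zero] at this
    refine this.congr fun n => ?_
    rw [← map_pow, LinearMap.toMatrixAlgEquiv_apply]
    rfl
  -- The `n`-th term is a fixed linear functional of the matrix of `σ ^ n`.
  let L : Matrix _ _ ℝ →ₗ[ℝ] ℝ := g ∘ₗ (LinearMap.applyₗ w) ∘ₗ M.symm.toLinearMap
  have hL : Continuous L := LinearMap.continuous_of_finiteDimensional _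
  refine (hM.map L hL).congr fun n => ?_
  simp [L, ← map_pow]

/-- A scalar output of a finite-dimensional linear recursion that tends to `0` is summable. -/
lemma summable_of_tendsto_zero {F : Type*} [AddCommGroup F] [Module ℝ F] [FiniteDimensional ℝ F]
    (T : F →ₗ[ℝ] F) (g : F →ₗ[ℝ] ℝ) (x : F)
    (h : Filter.Tendsto (fun n : ℕ => g ((T ^ n) x)) Filter.atTop (nhds 0)) :
    Summable fun n : ℕ => g ((T ^ n) x) := by
  let Φ : F →ₗ[ℝ] (ℕ → ℝ) := LinearMap.pi fun t => g ∘ₗ (T ^ t)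
  let Z : Submodule ℝ (ℕ → ℝ) :=
    { carrier := {c | Filter.Tendsto c Filter.atTop (nhds 0)}
      add_mem' := fun {a b} (ha : Filter.Tendsto a _ _) (hb : Filter.Tendsto b _ _) => by
        have := ha.add hb
        rwa [add_zero] at this
      zero_mem' := tendsto_const_nhds
      smul_mem' := fun r a (ha : Filter.Tendsto a _ _) => by
        have := ha.const_mul r
        rwa [mul_zero] at this }
  -- `W` carries the topology of pointwise convergence of sequences.
  let W : Submodule ℝ (ℕ → ℝ) := LinearMap.range Φ ⊓ Z
  have : FiniteDimensional ℝ W := Submodule.finiteDimensional_inf_left _ _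
  let shift : (ℕ → ℝ) →ₗ[ℝ] (ℕ → ℝ) := LinearMap.funLeft ℝ ℝ Nat.succ
  have hshift : ∀ c ∈ W, shift c ∈ W := by
    rintro c ⟨⟨y, rfl⟩, hz⟩
    refine ⟨⟨T y, ?_⟩, (Filter.tendsto_add_atTop_iff_nat 1).2 hz⟩
    ext t
    simp [Φ, shift, LinearMap.funLeft_apply, pow_succ]
  let σ : W →ₗ[ℝ] W := shift.restrict hshift
  have hσ : ∀ (n : ℕ) (w : W) (t : ℕ), ((σ ^ n) w : ℕ → ℝ) t = (w : ℕ → ℝ) (t + n) := by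
    intro n
    induction n with
    | zero => intro w t; rfl
    | succ n ih =>
      intro w t
      rw [pow_succ, Module.End.mul_apply, ih]
      rfl
  have hpt : ∀ w : W, Filter.Tendsto (fun n : ℕ => (σ ^ n) w) Filter.atTop (nhds 0) := by
    intro w
    rw [tendsto_subtype_rng]
    refine tendsto_pi_nhds.2 fun t => ?_
    simp only [hσ]
    have hw : Filter.Tendsto (w : ℕ → ℝ) Filter.atTop (nhds 0) := w.2.2
    exact ((Filter.tendsto_add_atTop_iff_nat t).2 hw).congr fun n => by rw [add_comm]
  let w : W := ⟨Φ x, ⟨x, rfl⟩, h⟩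
  refine (summable_of_pointwise σ hpt ((LinearMap.proj 0) ∘ₗ W.subtype) w).congr fun n => ?_
  have := hσ n w 0
  rw [zero_add] at this
  exact this

/-- One step of the state distribution, as a linear map on row vectors. -/
noncomputable def stepMap {S A : Type*} [Fintype S] [Fintype A]
    (P : S → A → S → ℝ) (π : S → A → ℝ) : (S → ℝ) →ₗ[ℝ] (S → ℝ) where
  toFun d := fun s' => ∑ s, ∑ a, d s * π s a * P s a s'
  map_add' d e := by
    ext s'
    simp [add_mul, Finset.sum_add_distrib]
  map_smul' c d := by
    ext s'
    simp [Finset.mul_sum, mul_assoc]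

lemma stateDist_eq_pow {S A : Type*} [Fintype S] [Fintype A]
    (P : S → A → S → ℝ) (π : S → A → ℝ) (μ : S → ℝ) (t : ℕ) :
    stateDist P π μ t = (stepMap P π ^ t) μ := by
  induction t with
  | zero => rfl
  | succ t ih =>
    rw [pow_succ', Module.End.mul_apply, ← ih]
    rfl

lemma stateDist_nonneg {S A : Type*} [Fintype S] [Fintype A]
    (P : S → A → S → ℝ) (π : S → A → ℝ) (μ : S → ℝ)
    (hP : ∀ s a, IsProb (P s a)) (hπ : ∀ s, IsProb (π s)) (hμ : IsProb μ) (t : ℕ) (s : S) :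
    0 ≤ stateDist P π μ t s := by
  induction t generalizing s with
  | zero => exact hμ.1 s
  | succ t ih =>
    exact Finset.sum_nonneg fun s' _ => Finset.sum_nonneg fun a _ =>
      mul_nonneg (mul_nonneg (ih s') ((hπ s').1 a)) ((hP s' a).1 s)

lemma entropy_nonneg {α : Type*} [Fintype α] (p : α → ℝ) (hp : IsProb p) : 0 ≤ entropy p := by
  unfold entropy
  rw [neg_nonneg]
  refine Finset.sum_nonpos fun x _ => mul_nonpos_of_nonneg_of_nonpos (hp.1 x) ?_
  refine Real.log_nonpos (hp.1 x) ?_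
  rw [← hp.2]
  exact Finset.single_le_sum (fun i _ => hp.1 i) (Finset.mem_univ x)

lemma abs_expAt_le {S A : Type*} [Fintype S] [Fintype A]
    (P : S → A → S → ℝ) (π : S → A → ℝ) (μ : S → ℝ)
    (hP : ∀ s a, IsProb (P s a)) (hπ : ∀ s, IsProb (π s)) (hμ : IsProb μ) (t : ℕ)
    (g G : S → A → ℝ) (h : ∀ s a, |g s a| ≤ G s a) :
    |expAt P π μ t g| ≤ expAt P π μ t G := by
  unfold expAt
  refine (Finset.abs_sum_le_sum_abs _ _).trans (Finset.sum_le_sum fun s _ => ?_)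
  have hd := stateDist_nonneg P π μ hP hπ hμ t s
  rw [abs_mul, abs_of_nonneg hd]
  refine mul_le_mul_of_nonneg_left ?_ hd
  refine (Finset.abs_sum_le_sum_abs _ _).trans (Finset.sum_le_sum fun a _ => ?_)
  rw [abs_mul, abs_of_nonneg ((hπ s).1 a)]
  exact mul_le_mul_of_nonneg_left (h s a) ((hπ s).1 a)

/-- Taking expectations in `A^π(s,a) = r(s,a) + E[V^π(s')] - V^π(s)` along a trajectory of another
policy `ρ`. -/
lemma expAt_adv {S A : Type*} [Fintype S] [Fintype A] [DecidableEq S]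
    (P : S → A → S → ℝ) (r : S → A → ℝ) (μ : S → ℝ) (π ρ : S → A → ℝ) (ε : ℝ) (k : S → ℝ)
    (hρ : ∀ s, IsProb (ρ s)) (t : ℕ) :
    expAt P ρ μ t (fun s a => adv P r π ε 1 s a + k s) =
      expAt P ρ μ t (fun s a => r s a + k s) +
        (∑ s, stateDist P ρ μ (t + 1) s * valueV P r π ε 1 s -
          ∑ s, stateDist P ρ μ t s * valueV P r π ε 1 s) := by
  generalize hV : valueV P r π ε 1 = V
  have h1 : ∑ s, stateDist P ρ μ (t + 1) s * V s =
      ∑ s, stateDist P ρ μ t s * ∑ a, ρ s a * ∑ s', P s a s' * V s' := by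
    simp only [stateDist, Finset.sum_mul, Finset.mul_sum]
    rw [Finset.sum_comm]
    refine Finset.sum_congr rfl fun s _ => ?_
    rw [Finset.sum_comm]
    exact Finset.sum_congr rfl fun a _ => Finset.sum_congr rfl fun s' _ => by ring
  rw [h1, ← Finset.sum_sub_distrib]
  unfold expAt
  rw [← Finset.sum_add_distrib]
  refine Finset.sum_congr rfl fun s _ => ?_
  have h2 : ∑ a, ρ s a * (adv P r π ε 1 s a + k s) =
      ∑ a, ρ s a * (r s a + k s) + ∑ a, ρ s a * ∑ s', P s a s' * V s' - (∑ a, ρ s a) * V s := by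
    rw [Finset.sum_mul, ← Finset.sum_add_distrib, ← Finset.sum_sub_distrib]
    refine Finset.sum_congr rfl fun a _ => ?_
    simp only [adv, valueQ, hV]
    ring
  rw [h2, (hρ s).2]
  ring

/-- **Performance-difference identity with demonstrations, undiscounted case (γ = 1)**.
Assuming: (i) for every state `s`, the series defining the undiscounted value
`V^π(s) = E[∑ₜ (r + ε h^π) | s₀ = s]` converges absolutely (i.e. the per-timestep
expectations of `|r| + ε h^π` are summable); (ii) under trajectories from `π*`,
`E[∑ₜ (|r| + ε h^{π*} + ε h^π)] < ∞`; and (iii) `E_{τ∼π*}[V^π(s_T)] → 0` as `T → ∞`;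
we have `η(π*) − η(π) = E_{τ∼π*}[∑ₜ (A^π(s_t,a_t) + ε h^{π*}_{s_t})]`. -/
theorem perf_diff_undiscounted {S A : Type*} [Fintype S] [Fintype A] [DecidableEq S]
    [Nonempty S] [Nonempty A]
    (P : S → A → S → ℝ) (r : S → A → ℝ) (μ : S → ℝ) (π πstar : S → A → ℝ) (ε : ℝ)
    (hP : ∀ s a, IsProb (P s a)) (hπ : ∀ s, IsProb (π s)) (hπstar : ∀ s, IsProb (πstar s))
    (hμ : IsProb μ) (hε : 0 < ε)
    (hV : ∀ s : S, Summable (fun t : ℕ =>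
      expAt P π (dirac s) t (fun s' a => |r s' a| + ε * entropy (π s'))))
    (hstar : Summable (fun t : ℕ =>
      expAt P πstar μ t
        (fun s a => |r s a| + ε * entropy (πstar s) + ε * entropy (π s))))
    (htail : Filter.Tendsto
      (fun T : ℕ => ∑ s, stateDist P πstar μ T s * valueV P r π ε 1 s)
      Filter.atTop (nhds 0)) :
    (∑' t : ℕ, expAt P πstar μ t (fun s a => r s a + ε * entropy (πstar s))) -
        (∑ s, μ s * valueV P r π ε 1 s) =
      ∑' t : ℕ,
        expAt P πstar μ t (fun s a => adv P r π ε 1 s a + ε * entropy (πstar s)) := by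
  set m : ℕ → ℝ := fun T => ∑ s, stateDist P πstar μ T s * valueV P r π ε 1 s with hm
  have hmsum : Summable m := by
    let g : (S → ℝ) →ₗ[ℝ] ℝ := ∑ s, valueV P r π ε 1 s • LinearMap.proj s
    have hg : ∀ t, g ((stepMap P πstar ^ t) μ) = m t := fun t => by
      simp [g, hm, stateDist_eq_pow, mul_comm]
    exact (summable_of_tendsto_zero (stepMap P πstar) g μ
      (htail.congr fun t => (hg t).symm)).congr hg
  have hrsum : Summable fun t : ℕ =>
      expAt P πstar μ t (fun s a => r s a + ε * entropy (πstar s)) := by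
    refine Summable.of_norm_bounded hstar fun t =>
      abs_expAt_le P πstar μ hP hπstar hμ t _ _ fun s a => ?_
    have h1 := mul_nonneg hε.le (entropy_nonneg _ (hπstar s))
    have h2 := mul_nonneg hε.le (entropy_nonneg _ (hπ s))
    have h3 := abs_add_le (r s a) (ε * entropy (πstar s))
    rw [abs_of_nonneg h1] at h3
    linarith
  have hm1 : Summable fun t => m (t + 1) := (summable_nat_add_iff 1).2 hmsum
  have key : ∀ t, expAt P πstar μ t (fun s a => adv P r π ε 1 s a + ε * entropy (πstar s)) =
      expAt P πstar μ t (fun s a => r s a + ε * entropy (πstar s)) + (m (t + 1) - m t) :=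
    fun t => expAt_adv P r μ π πstar ε (fun s => ε * entropy (πstar s)) hπstar t
  rw [tsum_congr key, hrsum.tsum_add (hm1.sub hmsum), hm1.tsum_sub hmsum, hmsum.tsum_eq_zero_add]
  have h0 : m 0 = ∑ s, μ s * valueV P r π ε 1 s := rfl
  rw [← h0]
  ring
end
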